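/- arXiv:1409.7883 — 4 statements merged into one kernel-verified Lean document; each statement's English description precedes it below -/
import Mathlib

section
/- Let K be an algebraically closed field and let f : K^n → K^n be a polynomial automorphism. Let h ∈ K[x_1,…,x_n] be a nonconstant squarefree polynomial whose zero set Z(h) is contained in Fix(f). If there exists a point a ∈ Z(h) at which all partial derivatives ∂h/∂x_1, …, ∂h/∂x_n vanish (i.e., H = Z(h) is singular), then Jac(f) = 1. -/
/-!
By the Nullstellensatz, since `h` is squarefree and every `F i - X i` vanishes on `Z(h)`, we can
write `F i = X i + h * g i`. Differentiating, `∂F_i/∂x_j = δ_ij + h ∂g_i/∂x_j + g_i ∂h/∂x_j`, so at a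
singular point `a` of `Z(h)` the Jacobian matrix is the identity (`eval_jacPoly_of_singular`).
On the other hand the chain rule applied to `G ∘ F = id` shows that the Jacobian determinant
of an automorphism is a unit of the polynomial ring, hence a constant (`isUnit_jacPoly`); its value
at `a` is `1`.
-/


open MvPolynomial

/-- The polynomial map `K^n → K^n` induced by the component polynomials `F i`. -/
noncomputable def evalMap {K : Type*} [CommSemiring K] {n : ℕ}
    (F : Fin n → MvPolynomial (Fin n) K) : (Fin n → K) → (Fin n → K) :=
  fun x i => eval x (F i)

/-- `F` defines a polynomial automorphism of `K^n`: the induced map is bijective with a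
polynomial inverse. -/
def IsPolyAut {K : Type*} [CommSemiring K] {n : ℕ}
    (F : Fin n → MvPolynomial (Fin n) K) : Prop :=
  ∃ G : Fin n → MvPolynomial (Fin n) K,
    (∀ x, evalMap F (evalMap G x) = x) ∧ (∀ x, evalMap G (evalMap F x) = x)

/-- The Jacobian of the polynomial map `F`: the determinant of the matrix of partial
derivatives `∂F_i/∂x_j` (for a polynomial automorphism it is a nonzero constant). -/
noncomputable def jacPoly {K : Type*} [CommRing K] {n : ℕ}
    (F : Fin n → MvPolynomial (Fin n) K) : MvPolynomial (Fin n) K :=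
  (Matrix.of fun i j => pderiv j (F i)).det

/-- The chain rule for substitution of the polynomials `F i` for the variables. -/
theorem pderiv_bind₁_eq_sum {K : Type*} [CommRing K] {n : ℕ}
    (F : Fin n → MvPolynomial (Fin n) K) (j : Fin n) (p : MvPolynomial (Fin n) K) :
    pderiv j (bind₁ F p) = ∑ k, bind₁ F (pderiv k p) * pderiv j (F k) := by
  induction p using MvPolynomial.induction_on with
  | C r => simp
  | add p q hp hq => simp [hp, hq, add_mul, Finset.sum_add_distrib]
  | mul_X p i hp =>
    have hX : ∀ k, bind₁ F (pderiv k (X i : MvPolynomial (Fin n) K))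
        = if k = i then 1 else 0 := by
      intro k
      by_cases hki : k = i
      · simp [hki]
      · simp [hki, pderiv_X_of_ne (Ne.symm hki)]
    simp only [map_mul, bind₁_X_right, Derivation.leibniz, smul_eq_mul, map_add, hX, hp, add_mul,
      Finset.sum_add_distrib, Finset.mul_sum]
    congr 1
    · simp
    · exact Finset.sum_congr rfl fun k _ => by ring

theorem isUnit_jacPoly {K : Type*} [Field K] [Infinite K] {n : ℕ}
    (F : Fin n → MvPolynomial (Fin n) K) (hF : IsPolyAut F) : IsUnit (jacPoly F) := by
  obtain ⟨G, -, hGF⟩ := hF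
  have hcomp : ∀ i, bind₁ F (G i) = X i := fun i => by
    -- Over an infinite field, polynomials with equal values at all points coincide.
    refine MvPolynomial.funext fun x => ?_
    have hx := congrFun (hGF x) i
    simp only [evalMap] at hx
    rw [eval_X, ← coe_aeval_eq_eval, RingHom.coe_coe, aeval_bind₁]
    exact hx
  have hmat : (Matrix.of fun i k => bind₁ F (pderiv k (G i)))
      * (Matrix.of fun k j => pderiv j (F k)) = 1 := by
    ext1 i j
    simp only [Matrix.mul_apply, Matrix.of_apply]
    rw [← pderiv_bind₁_eq_sum, hcomp, pderiv_X, Matrix.one_apply, Pi.single_apply]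
  have hdet := congrArg Matrix.det hmat
  rw [Matrix.det_mul, Matrix.det_one] at hdet
  exact IsUnit.of_mul_eq_one_right _ hdet

theorem dvd_of_vanish_on_zeros {K : Type*} [Field K] [IsAlgClosed K] {n : ℕ}
    {h p : MvPolynomial (Fin n) K} (hsf : Squarefree h)
    (hp : ∀ x : Fin n → K, eval x h = 0 → eval x p = 0) : h ∣ p := by
  have hmem : p ∈ vanishingIdeal K (zeroLocus K (Ideal.span {h})) := by
    rw [mem_vanishingIdeal_iff]
    intro x hx
    rw [zeroLocus_span] at hx
    exact hp x (hx h rfl)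
  rw [vanishingIdeal_zeroLocus_eq_radical] at hmem
  obtain ⟨m, hm⟩ := hmem
  exact hsf.isRadical m p (Ideal.mem_span_singleton.mp hm)

/-- If `F` agrees with the identity modulo `h`, its Jacobian is `1` at singular points of `Z(h)`. -/
theorem eval_jacPoly_of_singular {K : Type*} [Field K] {n : ℕ}
    (F : Fin n → MvPolynomial (Fin n) K) (h : MvPolynomial (Fin n) K)
    (hdvd : ∀ i, h ∣ F i - X i)
    (a : Fin n → K) (ha : eval a h = 0) (hsing : ∀ i, eval a (pderiv i h) = 0) :
    eval a (jacPoly F) = 1 := by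
  rw [jacPoly, RingHom.map_det]
  convert Matrix.det_one (n := Fin n) (R := K)
  ext i j
  obtain ⟨g, hg⟩ := hdvd i
  have hFi : F i = X i + h * g := by rw [← hg]; ring
  simp only [RingHom.mapMatrix_apply, Matrix.map_apply, Matrix.of_apply, hFi, map_add,
    Derivation.leibniz, smul_eq_mul, map_mul, ha, hsing, pderiv_X, Matrix.one_apply,
    Pi.single_apply]
  by_cases hij : i = j <;> simp [hij]

/-- If a polynomial automorphism `f` of `K^n` fixes pointwise the zero set
of a nonconstant squarefree polynomial `h`, and this hypersurface has a singular point `a`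
(all partials of `h` vanish at `a`), then `Jac(f) = 1`. -/
theorem jac_eq_one_of_fixed_hypersurface_singular {K : Type*} [Field K] [IsAlgClosed K]
    {n : ℕ} (F : Fin n → MvPolynomial (Fin n) K) (hF : IsPolyAut F)
    (h : MvPolynomial (Fin n) K) (hdeg : h.totalDegree ≠ 0) (hsf : Squarefree h)
    (hsub : ∀ x : Fin n → K, eval x h = 0 → evalMap F x = x)
    (a : Fin n → K) (ha : eval a h = 0) (hsing : ∀ i, eval a (pderiv i h) = 0) :
    jacPoly F = 1 := by
  have hdvd : ∀ i, h ∣ F i - X i := fun i =>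
    dvd_of_vanish_on_zeros hsf fun x hx => by
      have hxi := congrFun (hsub x hx) i
      simp only [evalMap] at hxi
      simp [hxi]
  have hval := eval_jacPoly_of_singular F h hdvd a ha hsing
  obtain ⟨c, -, hc⟩ := isUnit_iff_eq_C_of_isReduced.mp (isUnit_jacPoly F hF)
  rw [hc, eval_C] at hval
  rw [hc, hval, C_1]
end

section
/- Let K be an algebraically closed field and let f : K^n → K^n be a polynomial automorphism. Let h ∈ K[x_1,…,x_n] be an irreducible polynomial whose zero set Z(h) is contained in Fix(f). Then h ∘ f = λ·h as polynomials, where λ = Jac(f). -/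
/-!
By the Nullstellensatz, and since `(h)` is prime, the polynomials `F i - X i`, which vanish on
`Z(h)`, are multiples of `h`: `F = X + h • g`. Two expansions modulo `h` then compare constants.

* The Jacobian matrix of `F` is congruent modulo `h` to the rank one perturbation `1 + g ⊗ ∇h`
  of the identity, so `Jac(F) ≡ 1 + g ⬝ ∇h` (`dvd_jacPoly_sub`).
* A first order Taylor expansion gives `h ∘ F ≡ h * (1 + g ⬝ ∇h)` modulo `h ^ 2`
  (`sq_dvd_bind₁_add_mul_sub`).

On the other hand `h ∣ h ∘ F`, and `h ∘ F` is irreducible because substitution by `F` is a ring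
automorphism, so `h ∘ F = c * h` for a constant `c`. Hence `c ≡ 1 + g ⬝ ∇h ≡ Jac(F)` modulo `h`,
and two constants congruent modulo the nonunit `h` are equal. No assumption on the characteristic
is needed.
-/

open MvPolynomial

section

variable {K : Type*} [Field K] {n : ℕ}

lemma eval_bind₁_eq_eval_evalMap (F : Fin n → MvPolynomial (Fin n) K) (p : MvPolynomial (Fin n) K)
    (x : Fin n → K) : eval x (bind₁ F p) = eval (evalMap F x) p := by
  rw [← coe_aeval_eq_eval, RingHom.coe_coe, aeval_bind₁, ← coe_aeval_eq_eval, RingHom.coe_coe]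
  rfl

/-- Nullstellensatz for an irreducible hypersurface. -/
lemma dvd_of_eval_eq_zero [IsAlgClosed K] {h p : MvPolynomial (Fin n) K} (hirr : Irreducible h)
    (hp : ∀ x, eval x h = 0 → eval x p = 0) : h ∣ p := by
  have hprime : (Ideal.span {h}).IsPrime :=
    (Ideal.span_singleton_prime hirr.ne_zero).2 hirr.prime
  rw [← Ideal.mem_span_singleton, ← hprime.radical,
    ← vanishingIdeal_zeroLocus_eq_radical (K := K), mem_vanishingIdeal_iff]
  intro x hx
  exact hp x (hx h (Ideal.mem_span_singleton_self h))

/-- First order Taylor expansion of `p` along `h • g`. -/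
lemma sq_dvd_bind₁_add_mul_sub (h : MvPolynomial (Fin n) K) (g : Fin n → MvPolynomial (Fin n) K)
    (p : MvPolynomial (Fin n) K) :
    h ^ 2 ∣ bind₁ (fun i => X i + h * g i) p - (p + h * ∑ i, g i * pderiv i p) := by
  induction p using MvPolynomial.induction_on with
  | C a => simp
  | add p q hp hq =>
    convert dvd_add hp hq using 1
    simp only [map_add, mul_add, Finset.sum_add_distrib]
    ring
  | mul_X p j hp =>
    obtain ⟨r, hr⟩ := hp
    have hs : ∑ i, g i * pderiv i (p * X j) = (∑ i, g i * pderiv i p) * X j + p * g j := by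
      simp only [Derivation.leibniz, smul_eq_mul, pderiv_X, mul_add, Finset.sum_add_distrib,
        Pi.single_apply, Finset.sum_mul]
      rw [add_comm]
      congr 1
      · exact Finset.sum_congr rfl fun i _ => by ring
      · simp [mul_comm]
    rw [sub_eq_iff_eq_add] at hr
    rw [hs, map_mul, bind₁_X_right, hr]
    exact ⟨r * (X j + h * g j) + (∑ i, g i * pderiv i p) * g j, by ring⟩

/-- The Jacobian of `X + h • g` modulo `h`, by the matrix determinant lemma. -/
lemma dvd_jacPoly_sub (h : MvPolynomial (Fin n) K)
    (g : Fin n → MvPolynomial (Fin n) K) :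
    h ∣ jacPoly (fun i => X i + h * g i) - (1 + ∑ i, g i * pderiv i h) := by
  rw [← Ideal.mem_span_singleton, ← Ideal.Quotient.eq_zero_iff_mem, map_sub, sub_eq_zero]
  set π := Ideal.Quotient.mk (Ideal.span {h}) with hπ
  have h0 : π h = 0 := Ideal.Quotient.eq_zero_iff_mem.2 (Ideal.mem_span_singleton_self h)
  have hM : π.mapMatrix (Matrix.of fun i j => pderiv j (X i + h * g i)) =
      1 + Matrix.replicateCol Unit (fun i => π (g i)) *
        Matrix.replicateRow Unit (fun j => π (pderiv j h)) := by
    ext i j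
    simp only [RingHom.mapMatrix_apply, Matrix.map_apply, Matrix.of_apply, map_add,
      Derivation.leibniz, smul_eq_mul, map_mul, h0, pderiv_X, Matrix.add_apply,
      Matrix.mul_apply, Matrix.replicateCol_apply, Matrix.replicateRow_apply,
      Matrix.one_apply, Pi.single_apply]
    split_ifs <;> simp
  rw [jacPoly, RingHom.map_det, hM, Matrix.det_one_add_replicateCol_mul_replicateRow]
  simp [dotProduct, mul_comm]

/-- Substitution by a polynomial automorphism is a ring automorphism, so it preserves
irreducibility. That the two substitutions are inverse to each other as maps of polynomials may be
checked on points because `K` is infinite. -/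
lemma irreducible_bind₁_of_isPolyAut [Infinite K] {F : Fin n → MvPolynomial (Fin n) K}
    (hF : IsPolyAut F) {h : MvPolynomial (Fin n) K} (hirr : Irreducible h) :
    Irreducible (bind₁ F h) := by
  obtain ⟨G, hFG, hGF⟩ := hF
  have h1 : ∀ p, bind₁ G (bind₁ F p) = p := fun p => MvPolynomial.funext fun x => by
    rw [eval_bind₁_eq_eval_evalMap, eval_bind₁_eq_eval_evalMap, hFG]
  have h2 : ∀ p, bind₁ F (bind₁ G p) = p := fun p => MvPolynomial.funext fun x => by
    rw [eval_bind₁_eq_eval_evalMap, eval_bind₁_eq_eval_evalMap, hGF]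
  let e : MvPolynomial (Fin n) K ≃ₐ[K] MvPolynomial (Fin n) K :=
    AlgEquiv.ofAlgHom (bind₁ F) (bind₁ G) (AlgHom.ext h2) (AlgHom.ext h1)
  exact (MulEquiv.irreducible_iff e).2 hirr

end

/-- If a polynomial automorphism `f` of `K^n` (with constant Jacobian
`λ = Jac(f)`) fixes pointwise the zero set of an irreducible polynomial `h`, then
`h ∘ f = λ • h` as polynomials. -/
theorem comp_eq_jac_smul_of_fixed_hypersurface {K : Type*} [Field K] [IsAlgClosed K]
    {n : ℕ} (F : Fin n → MvPolynomial (Fin n) K) (hF : IsPolyAut F)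
    (lam : K) (hjac : jacPoly F = MvPolynomial.C lam)
    (h : MvPolynomial (Fin n) K) (hirr : Irreducible h)
    (hsub : ∀ x : Fin n → K, eval x h = 0 → evalMap F x = x) :
    (bind₁ F) h = MvPolynomial.C lam * h := by
  have : Infinite K := IsAlgClosed.instInfinite
  have hdvd : ∀ i, h ∣ F i - X i := fun i => dvd_of_eval_eq_zero hirr fun x hx => by
    rw [map_sub, eval_X, sub_eq_zero]
    exact congrFun (hsub x hx) i
  choose g hg using hdvd
  obtain rfl : F = fun i => X i + h * g i := funext fun i => by rw [← hg i]; ring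
  have hh : h ∣ bind₁ (fun i => X i + h * g i) h := dvd_of_eval_eq_zero hirr fun x hx => by
    rw [eval_bind₁_eq_eval_evalMap, hsub x hx, hx]
  obtain ⟨u, hu⟩ := hirr.associated_of_dvd (irreducible_bind₁_of_isPolyAut hF hirr) hh
  obtain ⟨c, -, hc⟩ := MvPolynomial.isUnit_iff_eq_C_of_isReduced.1 u.isUnit
  rw [← hu, hc, mul_comm]
  obtain ⟨r, hr⟩ := sq_dvd_bind₁_add_mul_sub h g h
  rw [← hu, hc] at hr
  -- Cancelling one factor `h` from the expansion of `h ∘ F = c * h`.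
  have h1 : C c - (1 + ∑ i, g i * pderiv i h) = h * r :=
    mul_left_cancel₀ hirr.ne_zero (by linear_combination hr)
  obtain ⟨s, hs⟩ := dvd_jacPoly_sub h g
  rw [hjac] at hs
  have h2 : h ∣ C (c - lam) := ⟨r - s, by rw [C_sub]; linear_combination h1 - hs⟩
  have h3 : c - lam = 0 := by
    by_contra hne
    exact hirr.not_isUnit (isUnit_of_dvd_unit h2 ((isUnit_iff_ne_zero.2 hne).map C))
  rw [sub_eq_zero.1 h3]
end

section
/- Let K be an algebraically closed field and let f : K^n → K^n be a non-special polynomial automorphism, i.e., Jac(f) ≠ 1. Let h ∈ K[x_1,…,x_n] be a nonconstant squarefree polynomial whose zero set H = Z(h) is contained in Fix(f). Then H is smooth: for every point a ∈ Z(h), the gradient (∂h/∂x_1(a), …, ∂h/∂x_n(a)) is nonzero. -/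
/-!
Let `f` be the automorphism with components `F i`. As `h` is squarefree, the Nullstellensatz turns
`Z(h) ⊆ Fix(f)` into divisibility: `F i = X i + h * g i` (`dvd_sub_X`). At a point `a` with
`h(a) = 0` the Jacobian matrix of `f` is therefore `I + (g i (a) * ∂h/∂x_j (a))_{i,j}`, so a singular point `a`
of `Z(h)` would give `Jac(f)(a) = 1`. By the chain rule `Jac(f)` is a unit of the polynomial ring,
hence a constant (`jacPoly_eq_C`), and that constant would be `1`, contradicting `Jac(f) ≠ 1`.
-/

open MvPolynomial

/-- The chain rule for the substitution of `F` into a polynomial `p`. -/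
theorem pderiv_bind₁ {K : Type*} [CommRing K] {n : ℕ} (F : Fin n → MvPolynomial (Fin n) K)
    (p : MvPolynomial (Fin n) K) (j : Fin n) :
    pderiv j (bind₁ F p) = ∑ k, bind₁ F (pderiv k p) * pderiv j (F k) := by
  induction p using MvPolynomial.induction_on with
  | C a => simp
  | add p q hp hq => simp [hp, hq, add_mul, Finset.sum_add_distrib]
  | mul_X p i hp =>
    simp only [map_mul, bind₁_X_right, pderiv_mul, hp, map_add, add_mul, Finset.sum_add_distrib,
      pderiv_X, Finset.sum_mul]
    congr 1
    · exact Finset.sum_congr rfl fun k _ => by ring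
    · rw [Finset.sum_eq_single i]
      · simp
      · intro k _ hk
        simp [Pi.single_eq_of_ne hk.symm]
      · simp

theorem jacPoly_eq_C {K : Type*} [Field K] [Infinite K] {n : ℕ}
    (F : Fin n → MvPolynomial (Fin n) K) (hF : IsPolyAut F) : ∃ c : K, jacPoly F = C c := by
  obtain ⟨G, -, hGF⟩ := hF
  -- Over an infinite field the pointwise identity `G ∘ F = id` holds between polynomials.
  have hcomp : ∀ i, bind₁ F (G i) = X i := fun i => by
    refine MvPolynomial.funext fun x => ?_
    have := congrFun (hGF x) i
    unfold evalMap at this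
    simpa [← aeval_eq_eval, aeval_bind₁] using this
  have hmul : (Matrix.of fun i k => bind₁ F (pderiv k (G i))) *
      (Matrix.of fun k j => pderiv j (F k)) = 1 := by
    ext1 i j
    rw [Matrix.mul_apply]
    simp only [Matrix.of_apply]
    rw [← pderiv_bind₁, hcomp, pderiv_X, Pi.single_apply, Matrix.one_apply]
  have hunit : IsUnit (jacPoly F) := by
    refine IsUnit.of_mul_eq_one_right (Matrix.of fun i k => bind₁ F (pderiv k (G i))).det ?_
    rw [jacPoly, ← Matrix.det_mul, hmul, Matrix.det_one]
  obtain ⟨c, -, hc⟩ := isUnit_iff_eq_C_of_isReduced.mp hunit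
  exact ⟨c, hc⟩

/-- By the Nullstellensatz, a squarefree polynomial whose zeros are fixed by `F` divides each
component of `F - id`. -/
theorem dvd_sub_X {K : Type*} [Field K] [IsAlgClosed K] {n : ℕ}
    (F : Fin n → MvPolynomial (Fin n) K) (h : MvPolynomial (Fin n) K) (hsf : Squarefree h)
    (hsub : ∀ x : Fin n → K, eval x h = 0 → evalMap F x = x) (i : Fin n) : h ∣ F i - X i := by
  have hmem : F i - X i ∈ (Ideal.span {h}).radical := by
    rw [← vanishingIdeal_zeroLocus_eq_radical (K := K), mem_vanishingIdeal_iff]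
    intro x hx
    have hx0 : eval x h = 0 := by
      simpa [aeval_eq_eval] using hx h (Ideal.mem_span_singleton_self h)
    have := congrFun (hsub x hx0) i
    simpa [aeval_eq_eval, sub_eq_zero, evalMap] using this
  obtain ⟨m, hm⟩ := hmem
  exact hsf.isRadical m _ (Ideal.mem_span_singleton.mp hm)

/-- If `f` is a non-special polynomial automorphism of `K^n`
(`Jac(f) ≠ 1`) and `h` is a nonconstant squarefree polynomial with `Z(h) ⊆ Fix(f)`,
then the hypersurface `Z(h)` is smooth: the gradient of `h` does not vanish at any of
its points. -/
theorem smooth_of_nonspecial_fixed_hypersurface {K : Type*} [Field K] [IsAlgClosed K]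
    {n : ℕ} (F : Fin n → MvPolynomial (Fin n) K) (hF : IsPolyAut F)
    (hjac : jacPoly F ≠ 1)
    (h : MvPolynomial (Fin n) K) (hdeg : h.totalDegree ≠ 0) (hsf : Squarefree h)
    (hsub : ∀ x : Fin n → K, eval x h = 0 → evalMap F x = x) :
    ∀ a : Fin n → K, eval a h = 0 → ∃ i, eval a (pderiv i h) ≠ 0 := by
  intro a ha
  by_contra! hsing
  obtain ⟨c, hc⟩ := jacPoly_eq_C F hF
  have hJ : eval a (jacPoly F) = 1 := by
    rw [jacPoly, RingHom.map_det]
    refine (congrArg Matrix.det ?_).trans Matrix.det_one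
    ext i j
    obtain ⟨g, hg⟩ := dvd_sub_X F h hsf hsub i
    rw [sub_eq_iff_eq_add] at hg
    simp [hg, ha, hsing, pderiv_X, Pi.single_apply, Matrix.one_apply, apply_ite]
  rw [hc, eval_C] at hJ
  exact hjac (by rw [hc, hJ, C_1])
end

section
/- Let h ∈ ℂ[x,y] be a polynomial and define f : ℂ³ → ℂ³ by f(x,y,z) = (x, y + z + h(x,y), z + h(x,y)). Then f is a polynomial automorphism of ℂ³ with Jac(f) = 1, and its set of fixed points is Fix(f) = {(x, y, 0) ∈ ℂ³ : h(x,y) = 0}; in particular Fix(f) is isomorphic to the plane curve Γ = {(x,y) ∈ ℂ² : h(x,y) = 0}. -/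
/-!
The map `f` is invertible because the second component minus the third recovers `y`; then
`h(x, y)` is known and can be subtracted from the third component to recover `z`. This gives the
polynomial inverse `exampleG`. The Jacobian matrix has rows `(1, 0, 0)`, `(h_x, 1 + h_y, 1)`,
`(h_x, h_y, 1)`, hence determinant `(1 + h_y) - h_y = 1`. A fixed point satisfies
`z + h(x, y) = 0` and `h(x, y) = 0`, i.e. `h(x, y) = 0` and `z = 0`, so forgetting `z` identifies
`Fix(f)` with the plane curve `h = 0`.
-/

open MvPolynomial

/-- The components of the map `f(x,y,z) = (x, y + z + h(x,y), z + h(x,y))` on `ℂ³`,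
where `h` is a polynomial in the two variables `x = X 0`, `y = X 1`. -/
noncomputable def exampleF (h : MvPolynomial (Fin 2) ℂ) : Fin 3 → MvPolynomial (Fin 3) ℂ :=
  ![X 0, X 1 + X 2 + rename Fin.castSucc h, X 2 + rename Fin.castSucc h]

/-- The components of the inverse `(x, y, z) ↦ (x, y - z, z - h(x, y - z))` of `exampleF h`. -/
noncomputable def exampleG (h : MvPolynomial (Fin 2) ℂ) : Fin 3 → MvPolynomial (Fin 3) ℂ :=
  ![X 0, X 1 - X 2, X 2 - bind₁ ![X 0, X 1 - X 2] h]

lemma evalMap_exampleF (h : MvPolynomial (Fin 2) ℂ) (x : Fin 3 → ℂ) :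
    evalMap (exampleF h) x =
      ![x 0, x 1 + x 2 + eval ![x 0, x 1] h, x 2 + eval ![x 0, x 1] h] := by
  have hx : x ∘ Fin.castSucc = ![x 0, x 1] := by
    funext i; fin_cases i <;> rfl
  funext i
  fin_cases i <;> simp [evalMap, exampleF, eval_rename, hx]

lemma evalMap_exampleG (h : MvPolynomial (Fin 2) ℂ) (x : Fin 3 → ℂ) :
    evalMap (exampleG h) x =
      ![x 0, x 1 - x 2, x 2 - eval ![x 0, x 1 - x 2] h] := by
  have hb : eval x (bind₁ ![X 0, X 1 - X 2] h) = eval ![x 0, x 1 - x 2] h := by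
    rw [eval, eval₂Hom_bind₁]
    congr 2
    funext i; fin_cases i <;> simp
  funext i
  fin_cases i <;> simp [evalMap, exampleG, hb]

/-- `h(x, y)` does not involve `z`, so its derivative in `z` vanishes. -/
lemma pderiv_two_rename (h : MvPolynomial (Fin 2) ℂ) :
    pderiv 2 (rename (Fin.castSucc : Fin 2 → Fin 3) h) = 0 := by
  classical
  apply pderiv_eq_zero_of_notMem_vars
  intro hm
  obtain ⟨i, -, hi⟩ := Finset.mem_image.1 (vars_rename _ _ hm)
  exact Fin.castSucc_ne_last i hi

lemma jacPoly_exampleF (h : MvPolynomial (Fin 2) ℂ) : jacPoly (exampleF h) = 1 := by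
  rw [jacPoly, Matrix.det_fin_three]
  simp [exampleF, pderiv_two_rename, pderiv_X]

lemma evalMap_exampleF_eq_self_iff (h : MvPolynomial (Fin 2) ℂ) (x : Fin 3 → ℂ) :
    evalMap (exampleF h) x = x ↔ eval (fun i : Fin 2 => x i.castSucc) h = 0 ∧ x 2 = 0 := by
  have hx : (fun i : Fin 2 => x i.castSucc) = ![x 0, x 1] := by
    funext i; fin_cases i <;> rfl
  rw [evalMap_exampleF, hx, funext_iff, Fin.forall_fin_succ, Fin.forall_fin_two]
  simp only [Matrix.cons_val, Fin.succ_zero_eq_one,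
    Fin.succ_one_eq_two, true_and]
  constructor
  · rintro ⟨h1, h2⟩
    exact ⟨by linear_combination h2, by linear_combination h1 - h2⟩
  · rintro ⟨h1, h2⟩
    exact ⟨by linear_combination h1 + h2, by linear_combination h1⟩

/-- For any `h ∈ ℂ[x,y]`, the map
`f(x,y,z) = (x, y + z + h(x,y), z + h(x,y))` is a polynomial automorphism of `ℂ³` with
`Jac(f) = 1`, and `Fix(f) = {(x,y,0) : h(x,y) = 0}`; in particular the projection
`(x,y,0) ↦ (x,y)` is a bijection (an isomorphism) from `Fix(f)` onto the plane curve
`Γ = {(x,y) : h(x,y) = 0}`. -/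
theorem example_special_automorphism_fix (h : MvPolynomial (Fin 2) ℂ) :
    IsPolyAut (exampleF h) ∧
    jacPoly (exampleF h) = 1 ∧
    {x : Fin 3 → ℂ | evalMap (exampleF h) x = x}
      = {x : Fin 3 → ℂ | eval (fun i : Fin 2 => x i.castSucc) h = 0 ∧ x 2 = 0} ∧
    Set.BijOn (fun (x : Fin 3 → ℂ) (i : Fin 2) => x i.castSucc)
      {x : Fin 3 → ℂ | evalMap (exampleF h) x = x}
      {y : Fin 2 → ℂ | eval y h = 0} := by
  have hfix : {x : Fin 3 → ℂ | evalMap (exampleF h) x = x}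
      = {x : Fin 3 → ℂ | eval (fun i : Fin 2 => x i.castSucc) h = 0 ∧ x 2 = 0} :=
    Set.ext fun x => evalMap_exampleF_eq_self_iff h x
  refine ⟨⟨exampleG h, fun x => ?_, fun x => ?_⟩, jacPoly_exampleF h, hfix, ?_⟩
  · rw [evalMap_exampleF, evalMap_exampleG]
    funext i
    fin_cases i <;> simp
  · rw [evalMap_exampleG, evalMap_exampleF]
    funext i
    fin_cases i <;> simp
  · rw [hfix]
    refine ⟨fun x hx => hx.1, fun x hx y hy hxy => ?_, fun y hy => ?_⟩
    · funext i
      refine Fin.lastCases ?_ (fun j => congrFun hxy j) i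
      exact hx.2.trans hy.2.symm
    · have hr : (fun i : Fin 2 => (Fin.snoc y 0 : Fin 3 → ℂ) i.castSucc) = y := by
        funext i
        exact Fin.snoc_castSucc (α := fun _ => ℂ) 0 y i
      refine ⟨Fin.snoc y 0, ⟨?_, ?_⟩, hr⟩
      · rw [hr]; exact hy
      · exact Fin.snoc_last (α := fun _ => ℂ) 0 y
end
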